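/- Let W₁, W₂ be regular bivariate matrix pencils and let (λ₀,μ₀) ∈ ℂ² be a finite eigenvalue of the two-parameter problem. Then there exists an angle φ ∈ [0, 2π) such that, for the rotated problem with matrices Ã_i = A_i, B̃_i = (cos φ)B_i + (sin φ)C_i, C̃_i = −(sin φ)B_i + (cos φ)C_i (i = 1,2) and the rotated point (λ̃₀, μ̃₀) = ((cos φ)λ₀ + (sin φ)μ₀, −(sin φ)λ₀ + (cos φ)μ₀), the point (λ̃₀, μ̃₀) is a finite eigenvalue of the rotated two-parameter problem and the genericity conditions (1)–(6) hold at (λ̃₀, μ̃₀) for the rotated problem. -/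

import Mathlib

open Matrix Kronecker

noncomputable section

def vkron {n₁ n₂ : ℕ} (x : Fin n₁ → ℂ) (y : Fin n₂ → ℂ) : Fin n₁ × Fin n₂ → ℂ :=
  fun p => x p.1 * y p.2

def GKer {N : Type*} [Fintype N] (A B : Matrix N N ℂ) (ξ : ℂ) :
    Submodule ℂ (N → ℂ) :=
  Submodule.span ℂ {v | ∃ p : N → Polynomial ℂ,
    (∀ t : ℂ, (A - t • B).mulVec (fun i => (p i).eval t) = 0) ∧
    v = fun i => (p i).eval ξ}

def RedMin {N : Type*} [Fintype N] (A B : Matrix N N ℂ) : Submodule ℂ (N → ℂ) :=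
  Submodule.span ℂ (⋃ ξ : ℂ, (GKer A B ξ : Set (N → ℂ)))

def nrank {N : Type*} [Fintype N] (A B : Matrix N N ℂ) : ℕ :=
  ⨆ ξ : ℂ, (A - ξ • B).rank

def Wmat {n : ℕ} (A B C : Matrix (Fin n) (Fin n) ℂ) (l m : ℂ) :
    Matrix (Fin n) (Fin n) ℂ := A + l • B + m • C

def charPoly {n : ℕ} (A B C : Matrix (Fin n) (Fin n) ℂ) : MvPolynomial (Fin 2) ℂ :=
  Matrix.det (Matrix.of fun i j =>
    MvPolynomial.C (A i j) + MvPolynomial.X 0 * MvPolynomial.C (B i j)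
      + MvPolynomial.X 1 * MvPolynomial.C (C i j))

def ev2 (p : MvPolynomial (Fin 2) ℂ) (l m : ℂ) : ℂ := MvPolynomial.eval ![l, m] p

def Delta0 {n₁ n₂ : ℕ} (B₁ C₁ : Matrix (Fin n₁) (Fin n₁) ℂ)
    (B₂ C₂ : Matrix (Fin n₂) (Fin n₂) ℂ) :
    Matrix (Fin n₁ × Fin n₂) (Fin n₁ × Fin n₂) ℂ :=
  B₁ ⊗ₖ C₂ - C₁ ⊗ₖ B₂

def Delta1 {n₁ n₂ : ℕ} (A₁ C₁ : Matrix (Fin n₁) (Fin n₁) ℂ)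
    (A₂ C₂ : Matrix (Fin n₂) (Fin n₂) ℂ) :
    Matrix (Fin n₁ × Fin n₂) (Fin n₁ × Fin n₂) ℂ :=
  C₁ ⊗ₖ A₂ - A₁ ⊗ₖ C₂

def Delta2 {n₁ n₂ : ℕ} (A₁ B₁ : Matrix (Fin n₁) (Fin n₁) ℂ)
    (A₂ B₂ : Matrix (Fin n₂) (Fin n₂) ℂ) :
    Matrix (Fin n₁ × Fin n₂) (Fin n₁ × Fin n₂) ℂ :=
  A₁ ⊗ₖ B₂ - B₁ ⊗ₖ A₂

/-- `(λ₀,μ₀)` is a finite eigenvalue of the two-parameter problem. -/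
def IsFiniteEigW {n₁ n₂ : ℕ}
    (A₁ B₁ C₁ : Matrix (Fin n₁) (Fin n₁) ℂ) (A₂ B₂ C₂ : Matrix (Fin n₂) (Fin n₂) ℂ)
    (l₀ m₀ : ℂ) : Prop :=
  (∀ q : MvPolynomial (Fin 2) ℂ,
      q ∣ charPoly A₁ B₁ C₁ → q ∣ charPoly A₂ B₂ C₂ →
      (¬ ∃ c : ℂ, q = MvPolynomial.C c) → ev2 q l₀ m₀ ≠ 0) ∧
  (∃ x₁ : Fin n₁ → ℂ, x₁ ≠ 0 ∧ (Wmat A₁ B₁ C₁ l₀ m₀).mulVec x₁ = 0) ∧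
  (∃ x₂ : Fin n₂ → ℂ, x₂ ≠ 0 ∧ (Wmat A₂ B₂ C₂ l₀ m₀).mulVec x₂ = 0)

/-- `(λ₀,μ₀)` is a finite eigenvalue of the pair of pencils
`(Δ₁ − λΔ₀, Δ₂ − μΔ₀)`. -/
def IsFiniteEigDelta {n₁ n₂ : ℕ}
    (A₁ B₁ C₁ : Matrix (Fin n₁) (Fin n₁) ℂ) (A₂ B₂ C₂ : Matrix (Fin n₂) (Fin n₂) ℂ)
    (l₀ m₀ : ℂ) : Prop :=
  (Delta1 A₁ C₁ A₂ C₂ - l₀ • Delta0 B₁ C₁ B₂ C₂).rank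
      < nrank (Delta1 A₁ C₁ A₂ C₂) (Delta0 B₁ C₁ B₂ C₂) ∧
  (Delta2 A₁ B₁ A₂ B₂ - m₀ • Delta0 B₁ C₁ B₂ C₂).rank
      < nrank (Delta2 A₁ B₁ A₂ B₂) (Delta0 B₁ C₁ B₂ C₂) ∧
  ∃ z : Fin n₁ × Fin n₂ → ℂ, z ≠ 0 ∧
    (Delta1 A₁ C₁ A₂ C₂).mulVec z = l₀ • (Delta0 B₁ C₁ B₂ C₂).mulVec z ∧
    (Delta2 A₁ B₁ A₂ B₂).mulVec z = m₀ • (Delta0 B₁ C₁ B₂ C₂).mulVec z ∧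
    z ∉ RedMin (Delta1 A₁ C₁ A₂ C₂) (Delta0 B₁ C₁ B₂ C₂) ∧
    z ∉ RedMin (Delta2 A₁ B₁ A₂ B₂) (Delta0 B₁ C₁ B₂ C₂)

/-- Genericity conditions (1)–(6) at `(λ₀,μ₀)`. -/
def Generic {n₁ n₂ : ℕ}
    (A₁ B₁ C₁ : Matrix (Fin n₁) (Fin n₁) ℂ) (A₂ B₂ C₂ : Matrix (Fin n₂) (Fin n₂) ℂ)
    (l₀ m₀ : ℂ) : Prop :=
  -- (1) the univariate polynomial `γ ↦ pᵢ(λ₀,γ)` is not identically zero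
  (∃ γ : ℂ, ev2 (charPoly A₁ B₁ C₁) l₀ γ ≠ 0) ∧
  (∃ γ : ℂ, ev2 (charPoly A₂ B₂ C₂) l₀ γ ≠ 0) ∧
  -- (2) the univariate polynomial `β ↦ pᵢ(β,μ₀)` is not identically zero
  (∃ β : ℂ, ev2 (charPoly A₁ B₁ C₁) β m₀ ≠ 0) ∧
  (∃ β : ℂ, ev2 (charPoly A₂ B₂ C₂) β m₀ ≠ 0) ∧
  -- (3)
  (∃ ε > (0:ℝ), ∀ η : ℂ, η ≠ l₀ → ‖η - l₀‖ < ε →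
    (Wmat A₁ B₁ C₁ η m₀).rank = n₁ ∧ (Wmat A₂ B₂ C₂ η m₀).rank = n₂) ∧
  -- (4)
  (∃ ε > (0:ℝ), ∀ θ : ℂ, θ ≠ m₀ → ‖θ - m₀‖ < ε →
    (Wmat A₁ B₁ C₁ l₀ θ).rank = n₁ ∧ (Wmat A₂ B₂ C₂ l₀ θ).rank = n₂) ∧
  -- (5)
  (∀ l₁ m₁ : ℂ, IsFiniteEigW A₁ B₁ C₁ A₂ B₂ C₂ l₁ m₁ → (l₁, m₁) ≠ (l₀, m₀) →
    l₁ ≠ l₀ ∧ m₁ ≠ m₀) ∧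
  -- (6)
  (∃ ε > (0:ℝ), ∀ η θ : ℂ, (η, θ) ≠ (l₀, m₀) → ‖η - l₀‖ + ‖θ - m₀‖ < ε →
    (Wmat A₁ B₁ C₁ l₀ m₀).rank + (Wmat A₂ B₂ C₂ l₀ m₀).rank <
    (Wmat A₁ B₁ C₁ η θ).rank + (Wmat A₂ B₂ C₂ η θ).rank)



theorem finite_common_zeros (a b : MvPolynomial (Fin 2) ℂ) (ha : a ≠ 0) (hab : IsRelPrime a b) :
    {P : ℂ × ℂ | ev2 a P.1 P.2 = 0 ∧ ev2 b P.1 P.2 = 0}.Finite := by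
  set I : Ideal (MvPolynomial (Fin 2) ℂ) := Ideal.span {a, b} with hI
  have hfin := I.finite_minimalPrimes_of_isNoetherianRing
  let f : ℂ × ℂ → Ideal (MvPolynomial (Fin 2) ℂ) :=
    fun P => RingHom.ker (MvPolynomial.eval ![P.1, P.2])
  have hf : Function.Injective f := by
    rintro ⟨l, m⟩ ⟨l', m'⟩ h
    have h0 : (MvPolynomial.X 0 - MvPolynomial.C l : MvPolynomial (Fin 2) ℂ) ∈ f (l, m) := by
      simp [f, RingHom.mem_ker]
    have h1 : (MvPolynomial.X 1 - MvPolynomial.C m : MvPolynomial (Fin 2) ℂ) ∈ f (l, m) := by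
      simp [f, RingHom.mem_ker]
    rw [h] at h0 h1
    simp [f, RingHom.mem_ker, sub_eq_zero] at h0 h1
    simp [h0, h1]
  refine Set.Finite.of_finite_image (f := f) (hfin.subset ?_) hf.injOn
  rintro _ ⟨P, ⟨hPa, hPb⟩, rfl⟩
  have hprime : (f P).IsPrime := RingHom.ker_isPrime _
  have hIle : I ≤ f P := by
    rw [hI, Ideal.span_le]
    rintro x (rfl | rfl)
    · exact hPa
    · exact hPb
  refine ⟨⟨hprime, hIle⟩, ?_⟩
  rintro q ⟨hq, hIq⟩ hqP
  by_contra hnot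
  have haq : a ∈ q := hIq (Ideal.subset_span (by simp))
  have hbq : b ∈ q := hIq (Ideal.subset_span (by simp))
  have hq0 : q ≠ ⊥ := by
    rintro rfl
    exact ha (by simpa using haq)
  obtain ⟨g, hgq, hgp⟩ : ∃ g, g ∈ q ∧ Prime g ∧ g ∣ a := by
    obtain ⟨s, hs, u, hu⟩ := UniqueFactorizationMonoid.exists_prime_factors a ha
    have : s.prod ∈ q := by
      have h2 : s.prod * ↑u ∈ q := by rw [hu]; exact haq
      rcases hq.mem_or_mem h2 with h | h
      · exact h
      · exact absurd (Ideal.eq_top_of_isUnit_mem _ h u.isUnit) hq.ne_top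
    obtain ⟨g, hg, hgq⟩ := (Ideal.IsPrime.multiset_prod_mem_iff_exists_mem hq s).1 this
    exact ⟨g, hgq, hs g hg, hu ▸ (Multiset.dvd_prod hg).mul_right _⟩
  obtain ⟨hgp, hga⟩ := hgp
  have hgI : (Ideal.span {g}).IsPrime := (Ideal.span_singleton_prime hgp.ne_zero).2 hgp
  let p0 : PrimeSpectrum (MvPolynomial (Fin 2) ℂ) := ⟨⊥, Ideal.isPrime_bot⟩
  let p1 : PrimeSpectrum (MvPolynomial (Fin 2) ℂ) := ⟨Ideal.span {g}, hgI⟩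
  let p2 : PrimeSpectrum (MvPolynomial (Fin 2) ℂ) := ⟨q, hq⟩
  let p3 : PrimeSpectrum (MvPolynomial (Fin 2) ℂ) := ⟨f P, hprime⟩
  have h01 : p0 < p1 := by
    change (⊥ : Ideal _) < Ideal.span {g}
    rw [bot_lt_iff_ne_bot]
    simpa using hgp.ne_zero
  have h12 : p1 < p2 := by
    change Ideal.span {g} < q
    refine lt_of_le_of_ne (by simpa [Ideal.span_le] using hgq) ?_
    intro h
    have : g ∣ b := by
      rw [← Ideal.mem_span_singleton, h]; exact hbq
    exact hgp.not_isUnit (hab hga this)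
  have h23 : p2 < p3 := by
    change q < f P
    exact lt_of_le_not_ge hqP hnot
  have hdim : ringKrullDim (MvPolynomial (Fin 2) ℂ) = 2 := by
    rw [MvPolynomial.ringKrullDim_of_isNoetherianRing]
    simp
  let c : LTSeries (PrimeSpectrum (MvPolynomial (Fin 2) ℂ)) :=
    { length := 3
      toFun := ![p0, p1, p2, p3]
      step := by
        intro i
        fin_cases i
        · exact h01
        · exact h12
        · exact h23 }
  have := Order.LTSeries.length_le_krullDim c
  change ((3 : ℕ) : WithBot ℕ∞) ≤ ringKrullDim _ at this
  rw [hdim] at this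
  exact absurd this (by decide)

theorem ev2_charPoly {n : ℕ} (A B C : Matrix (Fin n) (Fin n) ℂ) (l m : ℂ) :
    ev2 (charPoly A B C) l m = (Wmat A B C l m).det := by
  unfold ev2 charPoly Wmat
  rw [RingHom.map_det]
  congr 1
  ext i j
  simp

theorem rank_eq_of_ev2 {n : ℕ} (A B C : Matrix (Fin n) (Fin n) ℂ) (l m : ℂ)
    (h : ev2 (charPoly A B C) l m ≠ 0) : (Wmat A B C l m).rank = n := by
  rw [ev2_charPoly] at h
  rw [Matrix.rank_of_isUnit _ ((Matrix.isUnit_iff_isUnit_det _).2 (isUnit_iff_ne_zero.2 h))]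
  simp

theorem ev2_zero_of_ker {n : ℕ} (A B C : Matrix (Fin n) (Fin n) ℂ) (l m : ℂ)
    (h : ∃ x : Fin n → ℂ, x ≠ 0 ∧ (Wmat A B C l m).mulVec x = 0) :
    ev2 (charPoly A B C) l m = 0 := by
  rw [ev2_charPoly]
  exact Matrix.exists_mulVec_eq_zero_iff.1 h

theorem rank_lt_of_ker {n : ℕ} (A B C : Matrix (Fin n) (Fin n) ℂ) (l m : ℂ)
    (h : ∃ x : Fin n → ℂ, x ≠ 0 ∧ (Wmat A B C l m).mulVec x = 0) :
    (Wmat A B C l m).rank < n := by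
  refine lt_of_le_of_ne (by simpa using (Wmat A B C l m).rank_le_width) ?_
  intro hr
  obtain ⟨x, hx, hx0⟩ := h
  apply hx
  have h2 := LinearMap.finrank_range_add_finrank_ker (Wmat A B C l m).mulVecLin
  rw [Matrix.rank] at hr
  rw [hr] at h2
  simp at h2
  exact LinearMap.ker_eq_bot'.1 h2 x hx0

theorem exists_cofactors {n₁ n₂ : ℕ}
    (A₁ B₁ C₁ : Matrix (Fin n₁) (Fin n₁) ℂ) (A₂ B₂ C₂ : Matrix (Fin n₂) (Fin n₂) ℂ)
    (hreg₁ : charPoly A₁ B₁ C₁ ≠ 0) :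
    ∃ g : MvPolynomial (Fin 2) ℂ, ∃ S : Set (ℂ × ℂ), S.Finite ∧
      (∀ l m, ev2 g l m ≠ 0 → ev2 (charPoly A₁ B₁ C₁) l m = 0 →
        ev2 (charPoly A₂ B₂ C₂) l m = 0 → (l, m) ∈ S) ∧
      (∀ l m, IsFiniteEigW A₁ B₁ C₁ A₂ B₂ C₂ l m → ev2 g l m ≠ 0) := by
  obtain ⟨a, b, g, hab, h1, h2⟩ :=
    UniqueFactorizationMonoid.exists_reduced_factors _ hreg₁ (charPoly A₂ B₂ C₂)
  have ha : a ≠ 0 := by rintro rfl; simp at h1; exact hreg₁ h1.symm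
  refine ⟨g, _, finite_common_zeros a b ha hab, ?_, ?_⟩
  · intro l m hg e1 e2
    rw [← h1] at e1
    rw [← h2] at e2
    simp only [ev2, map_mul, mul_eq_zero] at e1 e2
    exact ⟨e1.resolve_left hg, e2.resolve_left hg⟩
  · intro l m h
    by_cases hc : ∃ c : ℂ, g = MvPolynomial.C c
    · obtain ⟨c, rfl⟩ := hc
      simp only [ev2, MvPolynomial.eval_C]
      rintro rfl
      simp at h1
      exact hreg₁ h1.symm
    · exact h.1 g ⟨a, h1.symm⟩ ⟨b, h2.symm⟩ hc

theorem continuous_ev2 (p : MvPolynomial (Fin 2) ℂ) :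
    Continuous (fun P : ℂ × ℂ => ev2 p P.1 P.2) := by
  unfold ev2
  refine (MvPolynomial.continuous_eval p).comp ?_
  refine continuous_pi fun i => ?_
  fin_cases i
  · exact continuous_fst
  · exact continuous_snd

theorem eventually_rank_le {n : ℕ} (A B C : Matrix (Fin n) (Fin n) ℂ) (l m : ℂ) :
    ∀ᶠ P : ℂ × ℂ in nhds (l, m), (Wmat A B C l m).rank ≤ (Wmat A B C P.1 P.2).rank := by
  have ho := isOpen_setOfPred_nat_le_rank (𝕜 := ℂ) (E := Fin n → ℂ) (F := Fin n → ℂ)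
    ((Wmat A B C l m).rank)
  let L : Matrix (Fin n) (Fin n) ℂ →ₗ[ℂ] ((Fin n → ℂ) →L[ℂ] (Fin n → ℂ)) :=
    (LinearMap.toContinuousLinearMap (𝕜 := ℂ) (E := Fin n → ℂ) (F' := Fin n → ℂ)).toLinearMap ∘ₗ
      (Matrix.toLin').toLinearMap
  have hL : ∀ M : Matrix (Fin n) (Fin n) ℂ, ((L M : (Fin n → ℂ) →L[ℂ] (Fin n → ℂ)) :
      (Fin n → ℂ) →ₗ[ℂ] (Fin n → ℂ)).rank = (M.rank : Cardinal) := by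
    intro M
    have : ((L M : (Fin n → ℂ) →L[ℂ] (Fin n → ℂ)) : (Fin n → ℂ) →ₗ[ℂ] (Fin n → ℂ))
      = M.mulVecLin := by ext; simp [L]
    rw [this, LinearMap.rank, Matrix.rank, Module.finrank_eq_rank]
  have hLc : Continuous L := LinearMap.continuous_of_finiteDimensional L
  have hW : Continuous (fun P : ℂ × ℂ => L (Wmat A B C P.1 P.2)) := by
    refine hLc.comp ?_
    unfold Wmat
    fun_prop
  have := (ho.preimage hW).mem_nhds (x := (l, m)) (by
    change ((Wmat A B C l m).rank : Cardinal) ≤ _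
    rw [hL])
  filter_upwards [this] with P hP
  change ((Wmat A B C l m).rank : Cardinal) ≤ _ at hP
  rw [hL] at hP
  exact_mod_cast hP

theorem cond6 {n₁ n₂ : ℕ}
    (A₁ B₁ C₁ : Matrix (Fin n₁) (Fin n₁) ℂ) (A₂ B₂ C₂ : Matrix (Fin n₂) (Fin n₂) ℂ)
    (l₀ m₀ : ℂ) (hreg₁ : charPoly A₁ B₁ C₁ ≠ 0)
    (heig : IsFiniteEigW A₁ B₁ C₁ A₂ B₂ C₂ l₀ m₀) :
    ∃ ε > (0:ℝ), ∀ η θ : ℂ, (η, θ) ≠ (l₀, m₀) → ‖η - l₀‖ + ‖θ - m₀‖ < ε →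
    (Wmat A₁ B₁ C₁ l₀ m₀).rank + (Wmat A₂ B₂ C₂ l₀ m₀).rank <
    (Wmat A₁ B₁ C₁ η θ).rank + (Wmat A₂ B₂ C₂ η θ).rank := by
  obtain ⟨g, S, hS, hgS, hg⟩ := exists_cofactors A₁ B₁ C₁ A₂ B₂ C₂ hreg₁
  have e1 := eventually_rank_le A₁ B₁ C₁ l₀ m₀
  have e2 := eventually_rank_le A₂ B₂ C₂ l₀ m₀
  have e3 : ∀ᶠ P : ℂ × ℂ in nhds (l₀, m₀), ev2 g P.1 P.2 ≠ 0 :=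
    (continuous_ev2 g).continuousAt.eventually_ne (hg _ _ heig)
  have e4 : ∀ᶠ P : ℂ × ℂ in nhds (l₀, m₀), P ∉ S \ {(l₀, m₀)} :=
    (hS.subset Set.sdiff_subset).isClosed.isOpen_compl.mem_nhds (by simp)
  obtain ⟨ε, hε, H⟩ := Metric.eventually_nhds_iff.1 (e1.and (e2.and (e3.and e4)))
  refine ⟨ε, hε, fun η θ hne hlt => ?_⟩
  have hd : dist (η, θ) (l₀, m₀) < ε := by
    rw [Prod.dist_eq, dist_eq_norm, dist_eq_norm]
    refine lt_of_le_of_lt (max_le ?_ ?_) hlt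
    · linarith [norm_nonneg (θ - m₀)]
    · linarith [norm_nonneg (η - l₀)]
  obtain ⟨h1, h2, h3, h4⟩ := H hd
  have r1 := rank_lt_of_ker _ _ _ _ _ heig.2.1
  have r2 := rank_lt_of_ker _ _ _ _ _ heig.2.2
  simp only at h1 h2 h3
  by_cases c1 : ev2 (charPoly A₁ B₁ C₁) η θ = 0
  · by_cases c2 : ev2 (charPoly A₂ B₂ C₂) η θ = 0
    · exact absurd ⟨hgS _ _ h3 c1 c2, hne⟩ h4
    · have := rank_eq_of_ev2 _ _ _ _ _ c2
      omega
  · have := rank_eq_of_ev2 _ _ _ _ _ c1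
    omega

def rotHom (c s : ℂ) : MvPolynomial (Fin 2) ℂ →ₐ[ℂ] MvPolynomial (Fin 2) ℂ :=
  MvPolynomial.aeval ![MvPolynomial.C c * MvPolynomial.X 0 - MvPolynomial.C s * MvPolynomial.X 1,
    MvPolynomial.C s * MvPolynomial.X 0 + MvPolynomial.C c * MvPolynomial.X 1]

theorem ev2_rotHom (c s : ℂ) (q : MvPolynomial (Fin 2) ℂ) (l m : ℂ) :
    ev2 (rotHom c s q) l m = ev2 q (c * l - s * m) (s * l + c * m) := by
  unfold ev2 rotHom
  induction q using MvPolynomial.induction_on with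
  | C a => simp
  | add p q hp hq => rw [map_add, map_add, map_add, hp, hq]
  | mul_X p i hp =>
    rw [map_mul, map_mul, map_mul, hp]
    congr 1
    fin_cases i <;> simp

theorem ev2_ext {p q : MvPolynomial (Fin 2) ℂ} (h : ∀ l m, ev2 p l m = ev2 q l m) : p = q := by
  refine MvPolynomial.funext fun x => ?_
  have hx : x = ![x 0, x 1] := by ext i; fin_cases i <;> rfl
  rw [hx]
  exact h _ _

theorem exists_ev2_ne {p : MvPolynomial (Fin 2) ℂ} (h : p ≠ 0) : ∃ l m, ev2 p l m ≠ 0 := by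
  by_contra! hc
  exact h (ev2_ext fun l m => by rw [hc]; simp [ev2])

theorem rotHom_rotHom (c s : ℂ) (h : c * c + s * s = 1) (q : MvPolynomial (Fin 2) ℂ) :
    rotHom c (-s) (rotHom c s q) = q := by
  refine ev2_ext fun l m => ?_
  rw [ev2_rotHom, ev2_rotHom]
  congr 1
  · linear_combination l * h
  · linear_combination m * h

theorem Wmat_rot {n : ℕ} (A B C : Matrix (Fin n) (Fin n) ℂ) (c s l m : ℂ) :
    Wmat A (c • B + s • C) (-s • B + c • C) l m = Wmat A B C (c * l - s * m) (s * l + c * m) := by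
  unfold Wmat
  ext i j
  simp
  ring

theorem charPoly_rot {n : ℕ} (A B C : Matrix (Fin n) (Fin n) ℂ) (c s : ℂ) :
    charPoly A (c • B + s • C) (-s • B + c • C) = rotHom c s (charPoly A B C) := by
  refine ev2_ext fun l m => ?_
  rw [ev2_rotHom, ev2_charPoly, ev2_charPoly, Wmat_rot]

theorem isFiniteEigW_rot {n₁ n₂ : ℕ}
    (A₁ B₁ C₁ : Matrix (Fin n₁) (Fin n₁) ℂ) (A₂ B₂ C₂ : Matrix (Fin n₂) (Fin n₂) ℂ)
    (l m c s : ℂ) (h : c * c + s * s = 1)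
    (heig : IsFiniteEigW A₁ B₁ C₁ A₂ B₂ C₂ l m) :
    IsFiniteEigW A₁ (c • B₁ + s • C₁) (-s • B₁ + c • C₁) A₂ (c • B₂ + s • C₂) (-s • B₂ + c • C₂)
      (c * l + s * m) (-s * l + c * m) := by
  have hl : c * (c * l + s * m) - s * (-s * l + c * m) = l := by linear_combination l * h
  have hm : s * (c * l + s * m) + c * (-s * l + c * m) = m := by linear_combination m * h
  obtain ⟨h1, h2, h3⟩ := heig
  refine ⟨?_, ?_, ?_⟩
  · intro q hq1 hq2 hc
    rw [charPoly_rot] at hq1 hq2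
    have d1 := map_dvd (rotHom c (-s)) hq1
    have d2 := map_dvd (rotHom c (-s)) hq2
    rw [rotHom_rotHom c s h] at d1 d2
    have := h1 _ d1 d2 ?_
    · rw [ev2_rotHom] at this
      simpa using this
    · rintro ⟨k, hk⟩
      apply hc
      refine ⟨k, ?_⟩
      have h3 := rotHom_rotHom c (-s) (by linear_combination h) q
      rw [hk, neg_neg] at h3
      rw [← h3]
      simp [rotHom]
  · rw [Wmat_rot, hl, hm]; exact h2
  · rw [Wmat_rot, hl, hm]; exact h3

theorem isFiniteEigW_unrot {n₁ n₂ : ℕ}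
    (A₁ B₁ C₁ : Matrix (Fin n₁) (Fin n₁) ℂ) (A₂ B₂ C₂ : Matrix (Fin n₂) (Fin n₂) ℂ)
    (l m c s : ℂ) (h : c * c + s * s = 1)
    (heig : IsFiniteEigW A₁ (c • B₁ + s • C₁) (-s • B₁ + c • C₁)
      A₂ (c • B₂ + s • C₂) (-s • B₂ + c • C₂) l m) :
    IsFiniteEigW A₁ B₁ C₁ A₂ B₂ C₂ (c * l - s * m) (s * l + c * m) := by
  have H := isFiniteEigW_rot _ _ _ _ _ _ l m c (-s) (by linear_combination h) heig
  have hB : ∀ {n : ℕ} (B C : Matrix (Fin n) (Fin n) ℂ),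
      c • (c • B + s • C) + -s • (-s • B + c • C) = B := by
    intro n B C
    ext i j
    simp
    linear_combination B i j * h
  have hC : ∀ {n : ℕ} (B C : Matrix (Fin n) (Fin n) ℂ),
      - -s • (c • B + s • C) + c • (-s • B + c • C) = C := by
    intro n B C
    ext i j
    simp
    linear_combination C i j * h
  rw [hB, hB, hC, hC] at H
  convert H using 1 <;> ring

theorem finite_bad (p : MvPolynomial (Fin 2) ℂ) (f g : Polynomial ℂ) (t₀ : ℂ)
    (h : ev2 p (f.eval t₀) (g.eval t₀) ≠ 0) :
    {t : ℂ | ev2 p (f.eval t) (g.eval t) = 0}.Finite := by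
  have key : ∀ t, (MvPolynomial.aeval ![f, g] p : Polynomial ℂ).eval t
      = ev2 p (f.eval t) (g.eval t) := by
    intro t
    unfold ev2
    rw [← MvPolynomial.coe_aeval_eq_eval, ← Polynomial.coe_aeval_eq_eval]
    change ((Polynomial.aeval t).comp (MvPolynomial.aeval _)) p = MvPolynomial.aeval _ p
    rw [MvPolynomial.comp_aeval]
    congr 2
    ext i
    fin_cases i <;> simp
  have hne : (MvPolynomial.aeval ![f, g] p : Polynomial ℂ) ≠ 0 := by
    intro h0
    apply h
    rw [← key, h0]
    simp
  refine (Polynomial.finite_setOfPred_isRoot hne).subset ?_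
  intro t ht
  change Polynomial.eval t _ = 0
  rw [key]
  exact ht

theorem finite_bad1 (p : MvPolynomial (Fin 2) ℂ) (hp : p ≠ 0) (l m : ℂ) :
    {t : ℂ | ∀ x, ev2 p (l + x) (m + t * x) = 0}.Finite := by
  have hX : (MvPolynomial.X 0 - MvPolynomial.C l : MvPolynomial (Fin 2) ℂ) ≠ 0 := by
    intro h
    have := congrArg (fun q => ev2 q (l + 1) 0) h
    simp [ev2] at this
  obtain ⟨a, b, hab⟩ := exists_ev2_ne (mul_ne_zero hp hX)
  simp only [ev2, map_mul] at hab
  have h1 := left_ne_zero_of_mul hab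
  have h2 := right_ne_zero_of_mul hab
  simp at h2
  refine (finite_bad p (Polynomial.C a) (Polynomial.C m + Polynomial.X * Polynomial.C (a - l))
    ((b - m) / (a - l)) ?_).subset ?_
  · simp only [Polynomial.eval_C, Polynomial.eval_add, Polynomial.eval_mul, Polynomial.eval_X]
    rw [div_mul_cancel₀ _ h2]
    simpa [ev2] using h1
  · intro t ht
    have := ht (a - l)
    simpa using this

theorem finite_bad2 (p : MvPolynomial (Fin 2) ℂ) (hp : p ≠ 0) (l m : ℂ) :
    {t : ℂ | ∀ x, ev2 p (l - t * x) (m + x) = 0}.Finite := by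
  have hX : (MvPolynomial.X 1 - MvPolynomial.C m : MvPolynomial (Fin 2) ℂ) ≠ 0 := by
    intro h
    have := congrArg (fun q => ev2 q 0 (m + 1)) h
    simp [ev2] at this
  obtain ⟨a, b, hab⟩ := exists_ev2_ne (mul_ne_zero hp hX)
  simp only [ev2, map_mul] at hab
  have h1 := left_ne_zero_of_mul hab
  have h2 := right_ne_zero_of_mul hab
  simp at h2
  refine (finite_bad p (Polynomial.C l - Polynomial.X * Polynomial.C (b - m)) (Polynomial.C b)
    ((l - a) / (b - m)) ?_).subset ?_
  · simp only [Polynomial.eval_C, Polynomial.eval_sub, Polynomial.eval_mul, Polynomial.eval_X]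
    rw [div_mul_cancel₀ _ h2]
    simpa [ev2] using h1
  · intro t ht
    have := ht (b - m)
    simpa using this

theorem finite_bad3 (l m : ℂ) (S : Set (ℂ × ℂ)) (hS : S.Finite) :
    {t : ℂ | ∃ P ∈ S, P ≠ (l, m) ∧
      ((P.1 - l) + t * (P.2 - m) = 0 ∨ -t * (P.1 - l) + (P.2 - m) = 0)}.Finite := by
  have : {t : ℂ | ∃ P ∈ S, P ≠ (l, m) ∧
      ((P.1 - l) + t * (P.2 - m) = 0 ∨ -t * (P.1 - l) + (P.2 - m) = 0)} ⊆
      ⋃ P ∈ S, {-(P.1 - l) / (P.2 - m), (P.2 - m) / (P.1 - l)} := by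
    rintro t ⟨P, hP, hne, h⟩
    simp only [Set.mem_iUnion]
    refine ⟨P, hP, ?_⟩
    have hne' : ¬ (P.1 - l = 0 ∧ P.2 - m = 0) := by
      rintro ⟨h1, h2⟩
      exact hne (Prod.ext (sub_eq_zero.1 h1) (sub_eq_zero.1 h2))
    rcases h with h | h
    · left
      have : P.2 - m ≠ 0 := by
        intro h0
        rw [h0] at h
        exact hne' ⟨by simpa using h, h0⟩
      rw [eq_div_iff this]
      linear_combination h
    · right
      have : P.1 - l ≠ 0 := by
        intro h0
        rw [h0] at h
        exact hne' ⟨h0, by simpa using h⟩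
      change t = _
      rw [eq_div_iff this]
      linear_combination -h
  exact (hS.biUnion fun P _ => by simp).subset this

theorem eventually_of_finite (a : ℂ) (T : Set ℂ) (hT : T.Finite) :
    ∃ ε > (0:ℝ), ∀ η : ℂ, η ≠ a → ‖η - a‖ < ε → η ∉ T := by
  have e : ∀ᶠ x in nhds a, x ∉ T \ {a} :=
    (hT.subset Set.sdiff_subset).isClosed.isOpen_compl.mem_nhds (by simp)
  obtain ⟨ε, hε, H⟩ := Metric.eventually_nhds_iff.1 e
  refine ⟨ε, hε, fun η hne hlt hmem => ?_⟩
  exact H (by rwa [dist_eq_norm]) ⟨hmem, hne⟩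

theorem finite_col (p : MvPolynomial (Fin 2) ℂ) (m : ℂ) (h : ∃ β, ev2 p β m ≠ 0) :
    {t : ℂ | ev2 p t m = 0}.Finite := by
  obtain ⟨β, hβ⟩ := h
  simpa using finite_bad p Polynomial.X (Polynomial.C m) β (by simpa using hβ)

theorem finite_row (p : MvPolynomial (Fin 2) ℂ) (l : ℂ) (h : ∃ β, ev2 p l β ≠ 0) :
    {t : ℂ | ev2 p l t = 0}.Finite := by
  obtain ⟨β, hβ⟩ := h
  simpa using finite_bad p (Polynomial.C l) Polynomial.X β (by simpa using hβ)

theorem rot_core {n₁ n₂ : ℕ}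
    (A₁ B₁ C₁ : Matrix (Fin n₁) (Fin n₁) ℂ) (A₂ B₂ C₂ : Matrix (Fin n₂) (Fin n₂) ℂ)
    (l₀ m₀ : ℂ) (hreg₁ : charPoly A₁ B₁ C₁ ≠ 0)
    (heig : IsFiniteEigW A₁ B₁ C₁ A₂ B₂ C₂ l₀ m₀)
    (c s t : ℂ) (hc : c ≠ 0) (hs : s = t * c) (h : c * c + s * s = 1)
    (S : Set (ℂ × ℂ)) (hS : ∀ l m, IsFiniteEigW A₁ B₁ C₁ A₂ B₂ C₂ l m → (l, m) ∈ S)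
    (t1 : ∃ x, ev2 (charPoly A₁ B₁ C₁) (l₀ + x) (m₀ + t * x) ≠ 0)
    (t2 : ∃ x, ev2 (charPoly A₂ B₂ C₂) (l₀ + x) (m₀ + t * x) ≠ 0)
    (t3 : ∃ x, ev2 (charPoly A₁ B₁ C₁) (l₀ - t * x) (m₀ + x) ≠ 0)
    (t4 : ∃ x, ev2 (charPoly A₂ B₂ C₂) (l₀ - t * x) (m₀ + x) ≠ 0)
    (t5 : ¬ ∃ P ∈ S, P ≠ (l₀, m₀) ∧
      ((P.1 - l₀) + t * (P.2 - m₀) = 0 ∨ -t * (P.1 - l₀) + (P.2 - m₀) = 0)) :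
    IsFiniteEigW A₁ (c • B₁ + s • C₁) (-s • B₁ + c • C₁) A₂ (c • B₂ + s • C₂) (-s • B₂ + c • C₂)
      (c * l₀ + s * m₀) (-s * l₀ + c * m₀) ∧
    Generic A₁ (c • B₁ + s • C₁) (-s • B₁ + c • C₁) A₂ (c • B₂ + s • C₂) (-s • B₂ + c • C₂)
      (c * l₀ + s * m₀) (-s * l₀ + c * m₀) := by
  have hE := isFiniteEigW_rot A₁ B₁ C₁ A₂ B₂ C₂ l₀ m₀ c s h heig
  have hrow : ∀ {n : ℕ} (A B C : Matrix (Fin n) (Fin n) ℂ),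
      (∃ x, ev2 (charPoly A B C) (l₀ - t * x) (m₀ + x) ≠ 0) →
      ∃ γ, ev2 (charPoly A (c • B + s • C) (-s • B + c • C)) (c * l₀ + s * m₀) γ ≠ 0 := by
    rintro n A B C ⟨x, hx⟩
    refine ⟨-s * l₀ + c * m₀ + x / c, ?_⟩
    rw [charPoly_rot, ev2_rotHom]
    convert hx using 2
    · rw [hs] at h ⊢
      field_simp
      linear_combination l₀ * h
    · field_simp
      linear_combination m₀ * h
  have hcol : ∀ {n : ℕ} (A B C : Matrix (Fin n) (Fin n) ℂ),
      (∃ x, ev2 (charPoly A B C) (l₀ + x) (m₀ + t * x) ≠ 0) →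
      ∃ β, ev2 (charPoly A (c • B + s • C) (-s • B + c • C)) β (-s * l₀ + c * m₀) ≠ 0 := by
    rintro n A B C ⟨x, hx⟩
    refine ⟨c * l₀ + s * m₀ + x / c, ?_⟩
    rw [charPoly_rot, ev2_rotHom]
    convert hx using 2
    · field_simp
      linear_combination l₀ * h
    · rw [hs] at h ⊢
      field_simp
      linear_combination m₀ * h
  have g1 := hrow _ _ _ t3
  have g2 := hrow _ _ _ t4
  have g3 := hcol _ _ _ t1
  have g4 := hcol _ _ _ t2
  refine ⟨hE, g1, g2, g3, g4, ?_, ?_, ?_, ?_⟩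
  · obtain ⟨ε, hε, H⟩ := eventually_of_finite (c * l₀ + s * m₀) _
      ((finite_col _ _ g3).union (finite_col _ _ g4))
    refine ⟨ε, hε, fun η hne hlt => ?_⟩
    have := H η hne hlt
    simp only [Set.mem_union, Set.mem_ofPred_eq, not_or] at this
    exact ⟨rank_eq_of_ev2 _ _ _ _ _ this.1, rank_eq_of_ev2 _ _ _ _ _ this.2⟩
  · obtain ⟨ε, hε, H⟩ := eventually_of_finite (-s * l₀ + c * m₀) _
      ((finite_row _ _ g1).union (finite_row _ _ g2))
    refine ⟨ε, hε, fun η hne hlt => ?_⟩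
    have := H η hne hlt
    simp only [Set.mem_union, Set.mem_ofPred_eq, not_or] at this
    exact ⟨rank_eq_of_ev2 _ _ _ _ _ this.1, rank_eq_of_ev2 _ _ _ _ _ this.2⟩
  · intro l₁ m₁ h₁ hne
    have hmem := hS _ _ (isFiniteEigW_unrot _ _ _ _ _ _ _ _ _ _ h h₁)
    have hP : (c * l₁ - s * m₁, s * l₁ + c * m₁) ≠ (l₀, m₀) := by
      intro he
      rw [Prod.mk.injEq] at he
      apply hne
      obtain ⟨e1, e2⟩ := he
      rw [← e1, ← e2]
      ext
      · simp only
        linear_combination -l₁ * h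
      · simp only
        linear_combination -m₁ * h
    have hnot : ∀ hh, False := fun hh => t5 ⟨_, hmem, hP, hh⟩
    constructor
    · intro he
      refine hnot (Or.inl ?_)
      simp only
      refine (mul_eq_zero.1 ?_).resolve_left hc
      rw [hs] at h he ⊢
      linear_combination l₁ * h + he
    · intro he
      refine hnot (Or.inr ?_)
      simp only
      refine (mul_eq_zero.1 ?_).resolve_left hc
      rw [hs] at h he ⊢
      linear_combination m₁ * h + he
  · refine cond6 _ _ _ _ _ _ _ _ ?_ hE
    obtain ⟨x, hx⟩ := g1
    intro h0
    rw [h0] at hx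
    simp [ev2] at hx

/-- **Generic rotation of parameters (Lemma on assumptions).** If `W₁, W₂` are regular
pencils and `(λ₀,μ₀)` is a finite eigenvalue of the two-parameter problem, then there
is an angle `φ ∈ [0,2π)` such that after the orthogonal rotation of parameters the
rotated point is a finite eigenvalue of the rotated problem and the genericity
conditions (1)–(6) hold there. -/
theorem exists_generic_rotation {n₁ n₂ : ℕ}
    (A₁ B₁ C₁ : Matrix (Fin n₁) (Fin n₁) ℂ) (A₂ B₂ C₂ : Matrix (Fin n₂) (Fin n₂) ℂ)
    (l₀ m₀ : ℂ)
    (hreg₁ : charPoly A₁ B₁ C₁ ≠ 0) (hreg₂ : charPoly A₂ B₂ C₂ ≠ 0)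
    (heig : IsFiniteEigW A₁ B₁ C₁ A₂ B₂ C₂ l₀ m₀) :
    ∃ φ : ℝ, 0 ≤ φ ∧ φ < 2 * Real.pi ∧
      IsFiniteEigW
        A₁ ((Real.cos φ : ℂ) • B₁ + (Real.sin φ : ℂ) • C₁)
          (-(Real.sin φ : ℂ) • B₁ + (Real.cos φ : ℂ) • C₁)
        A₂ ((Real.cos φ : ℂ) • B₂ + (Real.sin φ : ℂ) • C₂)
          (-(Real.sin φ : ℂ) • B₂ + (Real.cos φ : ℂ) • C₂)
        ((Real.cos φ : ℂ) * l₀ + (Real.sin φ : ℂ) * m₀)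
        (-(Real.sin φ : ℂ) * l₀ + (Real.cos φ : ℂ) * m₀) ∧
      Generic
        A₁ ((Real.cos φ : ℂ) • B₁ + (Real.sin φ : ℂ) • C₁)
          (-(Real.sin φ : ℂ) • B₁ + (Real.cos φ : ℂ) • C₁)
        A₂ ((Real.cos φ : ℂ) • B₂ + (Real.sin φ : ℂ) • C₂)
          (-(Real.sin φ : ℂ) • B₂ + (Real.cos φ : ℂ) • C₂)
        ((Real.cos φ : ℂ) * l₀ + (Real.sin φ : ℂ) * m₀)
        (-(Real.sin φ : ℂ) * l₀ + (Real.cos φ : ℂ) * m₀) := by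
  obtain ⟨g, S, hSf, hgS, hg⟩ := exists_cofactors A₁ B₁ C₁ A₂ B₂ C₂ hreg₁
  have hS : ∀ l m, IsFiniteEigW A₁ B₁ C₁ A₂ B₂ C₂ l m → (l, m) ∈ S := fun l m hlm =>
    hgS l m (hg l m hlm) (ev2_zero_of_ker _ _ _ _ _ hlm.2.1) (ev2_zero_of_ker _ _ _ _ _ hlm.2.2)
  have hbad := ((((finite_bad1 _ hreg₁ l₀ m₀).union (finite_bad1 _ hreg₂ l₀ m₀)).union
    (finite_bad2 _ hreg₁ l₀ m₀)).union (finite_bad2 _ hreg₂ l₀ m₀)).union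
    (finite_bad3 l₀ m₀ S hSf)
  have hbadR := hbad.preimage (f := ((↑) : ℝ → ℂ)) Complex.ofReal_injective.injOn
  obtain ⟨t, ht0, ht⟩ := ((Set.Ioi_infinite (0 : ℝ)).sdiff hbadR).nonempty
  simp only [Set.mem_preimage, Set.mem_union, not_or, Set.mem_ofPred_eq] at ht
  obtain ⟨⟨⟨⟨h1, h2⟩, h3⟩, h4⟩, h5⟩ := ht
  push Not at h1 h2 h3 h4
  have hcpos := Real.cos_arctan_pos t
  refine ⟨Real.arctan t, Real.arctan_nonneg.2 (le_of_lt ht0), ?_, ?_⟩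
  · have := Real.arctan_lt_pi_div_two t
    linarith [Real.pi_pos]
  · refine rot_core A₁ B₁ C₁ A₂ B₂ C₂ l₀ m₀ hreg₁ heig _ _ (t : ℂ) ?_ ?_ ?_ S hS h1 h2 h3 h4 h5
    · exact_mod_cast hcpos.ne'
    · have := Real.tan_mul_cos hcpos.ne'
      rw [Real.tan_arctan] at this
      exact_mod_cast this.symm
    · have := Real.cos_sq_add_sin_sq (Real.arctan t)
      rw [sq, sq] at this
      exact_mod_cast this
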